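/- (Stability of the VCS Controller in the overload regime) Let E>0, g_l>0, flexible loads F = {1,…,n_F} (n_F ≥ 1), inflexible loads I = {n_F+1,…,n} nonempty with P_{0,j} > 0 for all j ∈ I, P_{0,i} ≥ 0 for i ∈ F, κ_i > 0 for i ∈ F with κ̄ = Σ_{i∈F} κ_i, and b > 0. Suppose P̄₀ = Σᵢ P_{0,i} > P_max = E²·g_l/4, and let g* ∈ ℝⁿ be the proportional allocation equilibrium: g*ᵢ = (4/E²)·(P_{0,i} + (κᵢ/κ̄)·(P_max − P̄₀)) for i ∈ F and g*ᵢ = (4/E²)·P_{0,i} for i ∈ I; assume g*ᵢ ≥ 0 for all i ∈ F (so Σᵢ g*ᵢ = g_l and v(g*) = E/2). Then there exists a₀ > 0 such that for every a ∈ (0, a₀), all eigenvalues of the VCS Jacobian J_SC(g*) (with parameters a, b, κ) have negative real part; i.e., the proportional allocation equilibrium is locally asymptotically stable. -/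

import Mathlib

/-- The VCS Jacobian `J_SC(g)` as a matrix on the index type
`(Fin nF ⊕ Fin nI) ⊕ (Unit ⊕ Fin nF)`: the first block indexes the load conductances
(flexible then inflexible), `Unit` indexes the shared state `φ`, and the last block the
controller states `ĝ`. Here `ḡ = Σⱼ gⱼ`, `v = E·g_l/(ḡ+g_l)`, `ΔP̄ = v²·ḡ − Σⱼ P₀ⱼ`, and
`c = (v²·(g_l−ḡ)/(ḡ+g_l))² + ΔP̄·2v²·(ḡ−2g_l)/(ḡ+g_l)²`. -/
noncomputable def JSC (E gl a b : ℝ) {nF nI : ℕ}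
    (P0 : Fin nF ⊕ Fin nI → ℝ) (κ : Fin nF → ℝ) (g : Fin nF ⊕ Fin nI → ℝ) :
    Matrix ((Fin nF ⊕ Fin nI) ⊕ (Unit ⊕ Fin nF))
           ((Fin nF ⊕ Fin nI) ⊕ (Unit ⊕ Fin nF)) ℝ :=
  let gbar : ℝ := ∑ j, g j
  let v : ℝ := E * gl / (gbar + gl)
  let c : ℝ := (v ^ 2 * (gl - gbar) / (gbar + gl)) ^ 2 +
    (v ^ 2 * gbar - ∑ j, P0 j) * (2 * v ^ 2 * (gbar - 2 * gl) / (gbar + gl) ^ 2)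
  fun p q =>
    match p, q with
    | Sum.inl i, Sum.inl j =>
        (2 * v ^ 2 / (gbar + gl)) * g i +
          (match i, j with
           | Sum.inl i', Sum.inl j' => if i' = j' then -(v ^ 2 + b) else 0
           | Sum.inr i', Sum.inr j' => if i' = j' then -(v ^ 2) else 0
           | _, _ => 0)
    | Sum.inl (Sum.inl i'), Sum.inr (Sum.inl _) => -κ i'
    | Sum.inl (Sum.inr _), Sum.inr (Sum.inl _) => 0
    | Sum.inl (Sum.inl i'), Sum.inr (Sum.inr j') => if i' = j' then b else 0
    | Sum.inl (Sum.inr _), Sum.inr (Sum.inr _) => 0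
    | Sum.inr (Sum.inl _), Sum.inl _ => c
    | Sum.inr (Sum.inl _), Sum.inr _ => 0
    | Sum.inr (Sum.inr i'), Sum.inl (Sum.inl j') => if i' = j' then a else 0
    | Sum.inr (Sum.inr _), Sum.inl (Sum.inr _) => 0
    | Sum.inr (Sum.inr i'), Sum.inr (Sum.inr j') => if i' = j' then -a else 0
    | Sum.inr (Sum.inr _), Sum.inr (Sum.inl _) => 0

/-!
At full load `ḡ = g_l` an eigenvector of the Jacobian with eigenvalue `μ` satisfies four scalar
relations in the sums of its blocks. Eliminating everything but the total load `S` leaves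
`χ(μ) S = 0` with `χ` a real quartic, while the modes with `S = 0` are governed by a real quadratic.
Both polynomials are shown to be Hurwitz by expanding the ratio of their even and odd parts in a
continued fraction in `μ` with positive coefficients, which has nonnegative real part on the closed
right half-plane and so never takes the value `-1`. For the quartic, positivity of the coefficients
is where small `a` and the overload (which makes the gain of the `φ`-row positive) enter.
-/

section Hurwitz

/-- Numerator and denominator `(P, Q)` of the Stieltjes continued fraction
`P / Q = s₁ z + 1 / (s₂ z + 1 / (⋯ + 1 / (sₙ z)))`. A polynomial whose even and odd parts form such
a pair with positive coefficients is Hurwitz. -/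
def stieltjesPair (z : ℂ) : List ℝ → ℂ × ℂ
  | [] => (1, 0)
  | s :: l => (s * z * (stieltjesPair z l).1 + (stieltjesPair z l).2, (stieltjesPair z l).1)

lemma stieltjesPair_ne_zero (z : ℂ) (l : List ℝ) : stieltjesPair z l ≠ 0 := by
  induction l with
  | nil => simp [stieltjesPair]
  | cons s l ih =>
    intro h
    obtain ⟨hnum, hden⟩ := Prod.mk_eq_zero.1 h
    rw [hden, mul_zero, zero_add] at hnum
    exact ih (Prod.ext hden hnum)

lemma inner_stieltjesPair_nonneg {z : ℂ} (hz : 0 ≤ z.re) {l : List ℝ} (hl : ∀ s ∈ l, 0 ≤ s) :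
    0 ≤ inner ℝ (stieltjesPair z l).1 (stieltjesPair z l).2 := by
  induction l with
  | nil => simp [stieltjesPair]
  | cons s l ih =>
    obtain ⟨hs, hl⟩ := List.forall_mem_cons.1 hl
    have inner_step (P Q : ℂ) :
        inner ℝ (s * z * P + Q) P = s * z.re * Complex.normSq P + inner ℝ P Q := by
      simp only [Complex.inner, Complex.normSq_apply, Complex.mul_re, Complex.mul_im,
        Complex.add_re, Complex.add_im, Complex.conj_re, Complex.conj_im, Complex.ofReal_re,
        Complex.ofReal_im]
      ring
    rw [stieltjesPair, inner_step]
    have := ih hl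
    have := Complex.normSq_nonneg (stieltjesPair z l).1
    positivity

lemma stieltjesPair_fst_add_snd_ne_zero {z : ℂ} (hz : 0 ≤ z.re) {l : List ℝ}
    (hl : ∀ s ∈ l, 0 ≤ s) : (stieltjesPair z l).1 + (stieltjesPair z l).2 ≠ 0 := by
  intro h
  have hsnd : (stieltjesPair z l).2 = -(stieltjesPair z l).1 := (neg_eq_of_add_eq_zero_right h).symm
  have hinner := inner_stieltjesPair_nonneg hz hl
  rw [hsnd, inner_neg_right, neg_nonneg] at hinner
  have hfst : (stieltjesPair z l).1 = 0 := real_inner_self_nonpos.1 hinner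
  exact stieltjesPair_ne_zero z l (Prod.ext hfst (by rw [hsnd, hfst, neg_zero]; rfl))

lemma quadratic_ne_zero_of_re_nonneg {p q : ℝ} (hp : 0 < p) (hq : 0 < q) {z : ℂ}
    (hz : 0 ≤ z.re) : z ^ 2 + p * z + q ≠ 0 := by
  have hcf : z ^ 2 + p * z + q =
      q * ((stieltjesPair z [1 / p, p / q]).1 + (stieltjesPair z [1 / p, p / q]).2) := by
    have hp' : (p : ℂ) ≠ 0 := mod_cast hp.ne'
    have hq' : (q : ℂ) ≠ 0 := mod_cast hq.ne'
    simp only [stieltjesPair]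
    push_cast
    field_simp
    ring
  rw [hcf]
  refine mul_ne_zero (mod_cast hq.ne') (stieltjesPair_fst_add_snd_ne_zero hz ?_)
  simp only [List.forall_mem_cons, List.not_mem_nil, false_implies, implies_true, and_true]
  constructor <;> positivity

lemma quartic_ne_zero_of_re_nonneg {p₁ p₂ p₃ p₄ : ℝ} (h₁ : 0 < p₁) (h₃ : 0 < p₃) (h₄ : 0 < p₄)
    (hdet : p₃ ^ 2 + p₁ ^ 2 * p₄ < p₁ * p₂ * p₃) {z : ℂ} (hz : 0 ≤ z.re) :
    z ^ 4 + p₁ * z ^ 3 + p₂ * z ^ 2 + p₃ * z + p₄ ≠ 0 := by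
  -- `p₁, r, s, p₄` is the first column of the Routh array.
  obtain ⟨r, hr⟩ : ∃ r, p₂ = r + p₃ / p₁ := ⟨p₂ - p₃ / p₁, by ring⟩
  have hr_mul : p₁ * p₃ * r = p₁ * p₂ * p₃ - p₃ ^ 2 := by rw [hr]; field_simp; ring
  have hr_pos : 0 < r := by
    refine pos_of_mul_pos_right (a := p₁ * p₃) ?_ (by positivity)
    have : 0 < p₁ ^ 2 * p₄ := by positivity
    linarith
  obtain ⟨s, hs⟩ : ∃ s, p₃ = s + p₁ * p₄ / r := ⟨p₃ - p₁ * p₄ / r, by ring⟩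
  have hs_mul : p₁ * r * s = p₁ * p₃ * r - p₁ ^ 2 * p₄ := by rw [hs]; field_simp; ring
  have hs_pos : 0 < s := by
    refine pos_of_mul_pos_right (a := p₁ * r) ?_ (by positivity)
    linarith
  have hcf : z ^ 4 + p₁ * z ^ 3 + p₂ * z ^ 2 + p₃ * z + p₄ =
      p₄ * ((stieltjesPair z [1 / p₁, p₁ / r, r / s, s / p₄]).1 +
        (stieltjesPair z [1 / p₁, p₁ / r, r / s, s / p₄]).2) := by
    have h₁' : (p₁ : ℂ) ≠ 0 := mod_cast h₁.ne'
    have h₄' : (p₄ : ℂ) ≠ 0 := mod_cast h₄.ne'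
    have hr' : (r : ℂ) ≠ 0 := mod_cast hr_pos.ne'
    have hs' : (s : ℂ) ≠ 0 := mod_cast hs_pos.ne'
    rw [hr, hs]
    simp only [stieltjesPair]
    push_cast
    field_simp
    ring
  rw [hcf]
  refine mul_ne_zero (mod_cast h₄.ne') (stieltjesPair_fst_add_snd_ne_zero hz ?_)
  simp only [List.forall_mem_cons, List.not_mem_nil, false_implies, implies_true, and_true]
  refine ⟨?_, ?_, ?_, ?_⟩ <;> positivity

end Hurwitz

section Modes

lemma add_ofReal_ne_zero {μ : ℂ} {r : ℝ} (hr : 0 < r) (hμ : 0 ≤ μ.re) : μ + r ≠ 0 := by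
  intro h
  have hre := congrArg Complex.re h
  rw [Complex.add_re, Complex.ofReal_re, Complex.zero_re] at hre
  linarith

variable {ι ι' : Type*} [Fintype ι] [Fintype ι']

/-- The eigenvalue equations of the VCS Jacobian with eigenvalue `μ`, for the conductance block `u`,
the shared state `φ` and the controller states `w`. Here `V = v²`, `d = 2v²/(ḡ+g_l) • g`, and `c` is
the gain of the `φ`-row. -/
structure IsVCSMode (V a b c : ℝ) (d : ι ⊕ ι' → ℝ) (κ : ι → ℝ) (μ : ℂ)
    (u : ι ⊕ ι' → ℂ) (φ : ℂ) (w : ι → ℂ) : Prop where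
  flexible (i : ι) : d (.inl i) * ∑ j, u j - (V + b) * u (.inl i) - κ i * φ + b * w i =
    μ * u (.inl i)
  inflexible (i : ι') : d (.inr i) * ∑ j, u j - V * u (.inr i) = μ * u (.inr i)
  shared : c * ∑ j, u j = μ * φ
  controller (i : ι) : a * (u (.inl i) - w i) = μ * w i

namespace IsVCSMode

variable {V a b c : ℝ} {d : ι ⊕ ι' → ℝ} {κ : ι → ℝ} {μ : ℂ} {u : ι ⊕ ι' → ℂ} {φ : ℂ} {w : ι → ℂ}

lemma sum_flexible (h : IsVCSMode V a b c d κ μ u φ w) :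
    (∑ i, d (.inl i) : ℝ) * ∑ j, u j - (V + b) * ∑ i, u (.inl i) - (∑ i, κ i : ℝ) * φ
      + b * ∑ i, w i = μ * ∑ i, u (.inl i) := by
  simpa only [Finset.sum_add_distrib, Finset.sum_sub_distrib, ← Finset.mul_sum, ← Finset.sum_mul,
    ← Complex.ofReal_sum] using Fintype.sum_congr _ _ h.flexible

lemma sum_inflexible (h : IsVCSMode V a b c d κ μ u φ w) :
    (∑ i, d (.inr i) : ℝ) * ∑ j, u j - V * ∑ i, u (.inr i) = μ * ∑ i, u (.inr i) := by
  simpa only [Finset.sum_sub_distrib, ← Finset.mul_sum, ← Finset.sum_mul,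
    ← Complex.ofReal_sum] using Fintype.sum_congr _ _ h.inflexible

lemma sum_controller (h : IsVCSMode V a b c d κ μ u φ w) :
    a * (∑ i, u (.inl i) - ∑ i, w i) = μ * ∑ i, w i := by
  simpa only [Finset.sum_sub_distrib, ← Finset.mul_sum] using Fintype.sum_congr _ _ h.controller

lemma quartic_mul_sum_eq_zero (h : IsVCSMode V a b c d κ μ u φ w) (hd : ∑ j, d j = V) :
    (μ ^ 4 + (a + V + b : ℝ) * μ ^ 3 + (a * V + (∑ i, κ i) * c + b * ∑ i, d (.inl i) : ℝ) * μ ^ 2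
      + ((∑ i, κ i) * c * (a + V) : ℝ) * μ + ((∑ i, κ i) * c * a * V : ℝ)) * ∑ j, u j = 0 := by
  have hflex := h.sum_flexible
  have hinflex := h.sum_inflexible
  have hshared := h.shared
  have hctrl := h.sum_controller
  have hdI : ∑ i, d (.inr i) = V - ∑ i, d (.inl i) := by
    rw [← hd, Fintype.sum_sum_type, add_sub_cancel_left]
  rw [hdI] at hinflex
  rw [Fintype.sum_sum_type] at hflex hinflex hshared ⊢
  generalize ∑ i, u (.inl i) = U at *
  generalize ∑ i, u (.inr i) = T at *
  generalize ∑ i, w i = W at *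
  generalize ∑ i, κ i = k at *
  generalize ∑ i, d (.inl i) = D at *
  push_cast at hinflex ⊢
  have htotal : μ * (U + T) + k * φ + b * (U - W) = 0 := by linear_combination -hflex - hinflex
  have hlag : (μ + a) * (U - W) = μ * U := by linear_combination hctrl
  have hshare : (μ + V) * U = (μ + D) * (U + T) := by linear_combination hinflex
  linear_combination μ * (μ + a) * (μ + V) * htotal + k * (μ + a) * (μ + V) * hshared
    - b * μ * (μ + V) * hlag - b * μ ^ 2 * hshare

lemma sum_eq_zero (h : IsVCSMode V a b c d κ μ u φ w) (hV : 0 < V) (ha : 0 < a) (hb : 0 < b)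
    (hκ : 0 < ∑ i, κ i) (hd : ∑ j, d j = V) (hdF : 0 ≤ ∑ i, d (.inl i))
    (hsmall : a * (a + V + b) < (∑ i, κ i) * c) (hμ : 0 ≤ μ.re) : ∑ j, u j = 0 := by
  have hc : 0 < c :=
    pos_of_mul_pos_right ((by positivity : 0 < a * (a + V + b)).trans hsmall) hκ.le
  refine (mul_eq_zero.1 (h.quartic_mul_sum_eq_zero hd)).resolve_left
    (quartic_ne_zero_of_re_nonneg (by positivity) (by positivity) (by positivity) ?_ hμ)
  generalize ∑ i, κ i = k at *
  generalize ∑ i, d (.inl i) = D at *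
  have hrouth : (a + V + b) * (a * V + k * c + b * D) * (k * c * (a + V))
      - ((k * c * (a + V)) ^ 2 + (a + V + b) ^ 2 * (k * c * a * V)) =
      (a + V + b) * (b * D) * (k * c * (a + V))
        + k * c * b * V * (k * c - a * (a + V + b)) + k * c * b * (k * c * a) := by ring
  have : 0 < k * c - a * (a + V + b) := sub_pos.2 hsmall
  rw [← sub_pos, hrouth]
  positivity

lemma inflexible_eq_zero (h : IsVCSMode V a b c d κ μ u φ w) (hV : 0 < V) (hμ : 0 ≤ μ.re)
    (hS : ∑ j, u j = 0) (i : ι') : u (.inr i) = 0 := by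
  have hmul : (μ + V) * u (.inr i) = 0 := by
    linear_combination d (.inr i) * hS - h.inflexible i
  exact (mul_eq_zero.1 hmul).resolve_left (add_ofReal_ne_zero hV hμ)

lemma controller_eq_zero (h : IsVCSMode V a b c d κ μ u φ w) (ha : 0 < a) (hμ : 0 ≤ μ.re)
    {i : ι} (hu : u (.inl i) = 0) : w i = 0 := by
  have hmul : (μ + a) * w i = 0 := by linear_combination a * hu - h.controller i
  exact (mul_eq_zero.1 hmul).resolve_left (add_ofReal_ne_zero ha hμ)

lemma shared_eq_zero (h : IsVCSMode V a b c d κ μ u φ w) (hV : 0 < V) (ha : 0 < a)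
    (hκ : ∑ i, κ i ≠ 0) (hμ : 0 ≤ μ.re) (hS : ∑ j, u j = 0) : φ = 0 := by
  have hU : ∑ i, u (.inl i) = 0 := by
    simpa [Fintype.sum_sum_type, h.inflexible_eq_zero hV hμ hS] using hS
  have hW : ∑ i, w i = 0 := by
    have hmul : (μ + a) * ∑ i, w i = 0 := by linear_combination a * hU - h.sum_controller
    exact (mul_eq_zero.1 hmul).resolve_left (add_ofReal_ne_zero ha hμ)
  have hmul : ((∑ i, κ i : ℝ) : ℂ) * φ = 0 := by
    linear_combination -h.sum_flexible + (∑ i, d (.inl i) : ℝ) * hS - (V + b + μ) * hU + b * hW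
  exact (mul_eq_zero.1 hmul).resolve_left (mod_cast hκ)

lemma flexible_eq_zero (h : IsVCSMode V a b c d κ μ u φ w) (hV : 0 < V) (ha : 0 < a) (hb : 0 < b)
    (hμ : 0 ≤ μ.re) (hS : ∑ j, u j = 0) (hφ : φ = 0) (i : ι) : u (.inl i) = 0 := by
  have hmul : (μ ^ 2 + (a + V + b : ℝ) * μ + (a * V : ℝ)) * u (.inl i) = 0 := by
    push_cast
    linear_combination -(μ + a) * h.flexible i - b * h.controller i
      + (μ + a) * d (.inl i) * hS - (μ + a) * κ i * hφ
  exact (mul_eq_zero.1 hmul).resolve_left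
    (quadratic_ne_zero_of_re_nonneg (by positivity) (by positivity) hμ)

theorem eq_zero_of_re_nonneg (h : IsVCSMode V a b c d κ μ u φ w) (hV : 0 < V) (ha : 0 < a)
    (hb : 0 < b) (hκ : 0 < ∑ i, κ i) (hd : ∑ j, d j = V)
    (hdF : 0 ≤ ∑ i, d (.inl i)) (hsmall : a * (a + V + b) < (∑ i, κ i) * c) (hμ : 0 ≤ μ.re) :
    u = 0 ∧ φ = 0 ∧ w = 0 := by
  have hS : ∑ j, u j = 0 := h.sum_eq_zero hV ha hb hκ hd hdF hsmall hμ
  have hφ : φ = 0 := h.shared_eq_zero hV ha hκ.ne' hμ hS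
  have hF : ∀ i, u (.inl i) = 0 := h.flexible_eq_zero hV ha hb hμ hS hφ
  have hI : ∀ i, u (.inr i) = 0 := h.inflexible_eq_zero hV hμ hS
  exact ⟨funext (Sum.rec hF hI), hφ, funext fun i => h.controller_eq_zero ha hμ (hF i)⟩

end IsVCSMode

end Modes

section OperatingPoint

variable {ι ι' : Type*} [Fintype ι] [Fintype ι']

/-- The load voltage `v = E·g_l/(ḡ+g_l)` of the star network with conductances `g`. -/
noncomputable def loadVoltage (E gl : ℝ) (g : ι → ℝ) : ℝ :=
  E * gl / (∑ j, g j + gl)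

/-- The gain `c` of the `φ`-row of the VCS Jacobian: half the second derivative of `ΔP̄²` with
respect to `ḡ`. -/
noncomputable def sharedGain (E gl : ℝ) (P0 g : ι → ℝ) : ℝ :=
  (loadVoltage E gl g ^ 2 * (gl - ∑ j, g j) / (∑ j, g j + gl)) ^ 2 +
    (loadVoltage E gl g ^ 2 * ∑ j, g j - ∑ j, P0 j) *
      (2 * loadVoltage E gl g ^ 2 * (∑ j, g j - 2 * gl) / (∑ j, g j + gl) ^ 2)

/-- The proportional allocation `g*`: the shortfall `P_max - P̄₀`, with `P_max = E²·g_l/4`, is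
shared among the flexible loads in proportion to `κ`. -/
noncomputable def proportionalAllocation (E gl : ℝ) (P0 : ι ⊕ ι' → ℝ) (κ : ι → ℝ) : ι ⊕ ι' → ℝ :=
  Sum.elim
    (fun i => (4 / E ^ 2) *
      (P0 (Sum.inl i) + (κ i / ∑ k, κ k) * (E ^ 2 * gl / 4 - ∑ j, P0 j)))
    (fun i => (4 / E ^ 2) * P0 (Sum.inr i))

lemma sum_proportionalAllocation {E gl : ℝ} (hE : E ≠ 0) (P0 : ι ⊕ ι' → ℝ) {κ : ι → ℝ}
    (hκ : ∑ i, κ i ≠ 0) :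
    ∑ j, proportionalAllocation E gl P0 κ j = gl := by
  simp only [proportionalAllocation, Fintype.sum_sum_type, Sum.elim_inl, Sum.elim_inr,
    ← Finset.mul_sum, Finset.sum_add_distrib, ← Finset.sum_mul, ← Finset.sum_div]
  field_simp
  ring

lemma loadVoltage_of_sum_eq {E gl : ℝ} (hgl : gl ≠ 0) {g : ι → ℝ} (hg : ∑ j, g j = gl) :
    loadVoltage E gl g = E / 2 := by
  rw [loadVoltage, hg]
  field_simp
  ring

lemma sharedGain_of_sum_eq {E gl : ℝ} (hgl : gl ≠ 0) (P0 : ι → ℝ) {g : ι → ℝ}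
    (hg : ∑ j, g j = gl) :
    sharedGain E gl P0 g = E ^ 2 / (8 * gl) * (∑ j, P0 j - E ^ 2 * gl / 4) := by
  rw [sharedGain, loadVoltage_of_sum_eq hgl hg, hg]
  field_simp
  ring

end OperatingPoint

section Jacobian

lemma exists_mulVec_eq_smul_of_mem_spectrum {n K : Type*} [Fintype n] [DecidableEq n] [Field K]
    {A : Matrix n n K} {μ : K} (hμ : μ ∈ spectrum K A) : ∃ x ≠ 0, A.mulVec x = μ • x := by
  rw [← Matrix.spectrum_toLin', ← Module.End.hasEigenvalue_iff_mem_spectrum] at hμ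
  obtain ⟨x, hx⟩ := hμ.exists_hasEigenvector
  exact ⟨x, hx.2, by simpa only [Matrix.toLin'_apply] using hx.apply_eq_smul⟩

variable {nF nI : ℕ}

section Rows

variable (E gl a b : ℝ) (P0 : Fin nF ⊕ Fin nI → ℝ) (κ : Fin nF → ℝ) (g : Fin nF ⊕ Fin nI → ℝ)
  (x : (Fin nF ⊕ Fin nI) ⊕ (Unit ⊕ Fin nF) → ℂ)

lemma JSC_mulVec_flexible (i : Fin nF) :
    ((JSC E gl a b P0 κ g).map (Complex.ofReal : ℝ → ℂ)).mulVec x (.inl (.inl i)) =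
      (2 * loadVoltage E gl g ^ 2 / (∑ j, g j + gl) * g (.inl i) : ℝ) * ∑ j, x (.inl j)
        - ((loadVoltage E gl g ^ 2 : ℝ) + b) * x (.inl (.inl i)) - κ i * x (.inr (.inl ()))
        + b * x (.inr (.inr i)) := by
  simp only [Matrix.mulVec, dotProduct, Matrix.map_apply]
  simp only [JSC, loadVoltage, Fintype.sum_sum_type,
    Finset.univ_unique, PUnit.default_eq_unit, Finset.sum_singleton, Complex.ofReal_add, add_mul,
    Finset.sum_add_distrib, ← Finset.mul_sum, apply_ite Complex.ofReal, Complex.ofReal_zero,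
    ite_mul, zero_mul, Finset.sum_const_zero, Finset.sum_ite_eq, Finset.mem_univ, if_true]
  push_cast
  ring

lemma JSC_mulVec_inflexible (i : Fin nI) :
    ((JSC E gl a b P0 κ g).map (Complex.ofReal : ℝ → ℂ)).mulVec x (.inl (.inr i)) =
      (2 * loadVoltage E gl g ^ 2 / (∑ j, g j + gl) * g (.inr i) : ℝ) * ∑ j, x (.inl j)
        - (loadVoltage E gl g ^ 2 : ℝ) * x (.inl (.inr i)) := by
  simp only [Matrix.mulVec, dotProduct, Matrix.map_apply]
  simp only [JSC, loadVoltage, Fintype.sum_sum_type,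
    Complex.ofReal_add, add_mul, Finset.sum_add_distrib, ← Finset.mul_sum,
    apply_ite Complex.ofReal, Complex.ofReal_zero, ite_mul, zero_mul, Finset.sum_const_zero,
    Finset.sum_ite_eq, Finset.mem_univ, if_true]
  push_cast
  ring

lemma JSC_mulVec_shared :
    ((JSC E gl a b P0 κ g).map (Complex.ofReal : ℝ → ℂ)).mulVec x (.inr (.inl ())) =
      sharedGain E gl P0 g * ∑ j, x (.inl j) := by
  simp only [Matrix.mulVec, dotProduct, Matrix.map_apply]
  simp only [JSC, sharedGain, loadVoltage,
    Fintype.sum_sum_type, ← Finset.mul_sum, Complex.ofReal_zero, zero_mul, Finset.sum_const_zero,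
    add_zero, mul_add]

lemma JSC_mulVec_controller (i : Fin nF) :
    ((JSC E gl a b P0 κ g).map (Complex.ofReal : ℝ → ℂ)).mulVec x (.inr (.inr i)) =
      a * (x (.inl (.inl i)) - x (.inr (.inr i))) := by
  simp only [Matrix.mulVec, dotProduct, Matrix.map_apply]
  simp only [JSC, Fintype.sum_sum_type,
    apply_ite Complex.ofReal, Complex.ofReal_zero, Complex.ofReal_neg, ite_mul, zero_mul,
    Finset.sum_const_zero, Finset.sum_ite_eq, Finset.mem_univ, if_true]
  ring

end Rows

lemma isVCSMode_of_mulVec_JSC_eq_smul {E gl a b : ℝ} {P0 : Fin nF ⊕ Fin nI → ℝ} {κ : Fin nF → ℝ}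
    {g : Fin nF ⊕ Fin nI → ℝ} {μ : ℂ} {x : (Fin nF ⊕ Fin nI) ⊕ (Unit ⊕ Fin nF) → ℂ}
    (hx : ((JSC E gl a b P0 κ g).map (Complex.ofReal : ℝ → ℂ)).mulVec x = μ • x) :
    IsVCSMode (loadVoltage E gl g ^ 2) a b (sharedGain E gl P0 g)
      (fun j => 2 * loadVoltage E gl g ^ 2 / (∑ j, g j + gl) * g j) κ μ
      (fun j => x (.inl j)) (x (.inr (.inl ()))) (fun i => x (.inr (.inr i))) where
  flexible i := (JSC_mulVec_flexible E gl a b P0 κ g x i).symm.trans (congrFun hx _)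
  inflexible i := (JSC_mulVec_inflexible E gl a b P0 κ g x i).symm.trans (congrFun hx _)
  shared := (JSC_mulVec_shared E gl a b P0 κ g x).symm.trans (congrFun hx _)
  controller i := (JSC_mulVec_controller E gl a b P0 κ g x i).symm.trans (congrFun hx _)

theorem re_neg_of_mem_spectrum_JSC {E gl a b : ℝ} (hE : E ≠ 0) (hgl : 0 < gl) (ha : 0 < a)
    (hb : 0 < b) {P0 : Fin nF ⊕ Fin nI → ℝ} {κ : Fin nF → ℝ} (hκ : 0 < ∑ i, κ i)
    {g : Fin nF ⊕ Fin nI → ℝ} (hg : ∑ j, g j = gl) (hgF : 0 ≤ ∑ i, g (.inl i))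
    (hsmall : a * (a + E ^ 2 / 4 + b) <
      (∑ i, κ i) * (E ^ 2 / (8 * gl) * (∑ j, P0 j - E ^ 2 * gl / 4)))
    {μ : ℂ} (hμ : μ ∈ spectrum ℂ ((JSC E gl a b P0 κ g).map (Complex.ofReal : ℝ → ℂ))) :
    μ.re < 0 := by
  obtain ⟨x, hx_ne, hx⟩ := exists_mulVec_eq_smul_of_mem_spectrum hμ
  by_contra! hre
  have hmode := isVCSMode_of_mulVec_JSC_eq_smul hx
  rw [loadVoltage_of_sum_eq hgl.ne' hg, sharedGain_of_sum_eq hgl.ne' P0 hg, hg, div_pow,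
    show (2 : ℝ) ^ 2 = 4 by norm_num] at hmode
  have hd : ∑ j, 2 * (E ^ 2 / 4) / (gl + gl) * g j = E ^ 2 / 4 := by
    rw [← Finset.mul_sum, hg]
    field_simp
    ring
  have hdF : 0 ≤ ∑ i, 2 * (E ^ 2 / 4) / (gl + gl) * g (.inl i) := by
    rw [← Finset.mul_sum]
    positivity
  obtain ⟨hu, hφ, hw⟩ :=
    hmode.eq_zero_of_re_nonneg (by positivity) ha hb hκ hd hdF hsmall hre
  refine hx_ne (funext ?_)
  rintro (j | _ | i)
  exacts [congrFun hu j, hφ, congrFun hw i]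

end Jacobian

open scoped Topology in
theorem stmt_14_general {E gl b : ℝ} (hE : E ≠ 0) (hgl : 0 < gl) (hb : 0 < b) {nF nI : ℕ}
    (P0 : Fin nF ⊕ Fin nI → ℝ) {κ : Fin nF → ℝ} (hκ : 0 < ∑ i, κ i)
    (hover : E ^ 2 * gl / 4 < ∑ j, P0 j)
    (hgF : 0 ≤ ∑ i, proportionalAllocation E gl P0 κ (.inl i)) :
    ∃ a₀ > 0, ∀ a : ℝ, 0 < a → a < a₀ →
      ∀ μ ∈ spectrum ℂ
        ((JSC E gl a b P0 κ (proportionalAllocation E gl P0 κ)).map (Complex.ofReal : ℝ → ℂ)),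
        μ.re < 0 := by
  have : 0 < ∑ j, P0 j - E ^ 2 * gl / 4 := sub_pos.2 hover
  have hsmall : ∀ᶠ a in 𝓝[>] (0 : ℝ), a * (a + E ^ 2 / 4 + b) <
      (∑ i, κ i) * (E ^ 2 / (8 * gl) * (∑ j, P0 j - E ^ 2 * gl / 4)) := by
    have hcont : Continuous fun a : ℝ => a * (a + E ^ 2 / 4 + b) := by fun_prop
    refine nhdsWithin_le_nhds (hcont.continuousAt.eventually_lt_const ?_)
    simp only [zero_mul]
    positivity
  obtain ⟨a₀, ha₀, hsub⟩ := mem_nhdsGT_iff_exists_Ioo_subset.1 hsmall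
  exact ⟨a₀, ha₀, fun a ha haa₀ μ hμ =>
    re_neg_of_mem_spectrum_JSC hE hgl ha hb hκ (sum_proportionalAllocation hE P0 hκ.ne') hgF
      (hsub ⟨ha, haa₀⟩) hμ⟩

/-- Stability of the VCS controller in the overload regime: when total demand exceeds the
network capacity `E²·g_l/4`, at the proportional allocation equilibrium `g*` there exists
`a₀ > 0` such that for all `a ∈ (0, a₀)` every eigenvalue of the VCS Jacobian `J_SC(g*)`
has negative real part, i.e. the equilibrium is locally asymptotically stable. -/
theorem stmt_14 (E gl b : ℝ) (hE : 0 < E) (hgl : 0 < gl) (hb : 0 < b)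
    (nF nI : ℕ) (hnF : 1 ≤ nF) (hnI : 1 ≤ nI)
    (P0 : Fin nF ⊕ Fin nI → ℝ)
    (hP0F : ∀ i : Fin nF, 0 ≤ P0 (Sum.inl i))
    (hP0I : ∀ i : Fin nI, 0 < P0 (Sum.inr i))
    (κ : Fin nF → ℝ) (hκ : ∀ i, 0 < κ i)
    (hover : E ^ 2 * gl / 4 < ∑ j, P0 j)
    (g : Fin nF ⊕ Fin nI → ℝ)
    (hgdef : g = Sum.elim
      (fun i => (4 / E ^ 2) *
        (P0 (Sum.inl i) + (κ i / ∑ k, κ k) * (E ^ 2 * gl / 4 - ∑ j, P0 j)))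
      (fun i => (4 / E ^ 2) * P0 (Sum.inr i)))
    (hgF : ∀ i : Fin nF, 0 ≤ g (Sum.inl i)) :
    ∃ a₀ > 0, ∀ a : ℝ, 0 < a → a < a₀ →
      ∀ μ ∈ spectrum ℂ ((JSC E gl a b P0 κ g).map (Complex.ofReal : ℝ → ℂ)),
        μ.re < 0 := by
  subst hgdef
  exact stmt_14_general hE.ne' hgl hb P0
    (Finset.sum_pos (fun i _ => hκ i) ⟨⟨0, hnF⟩, Finset.mem_univ _⟩) hover
    (Finset.sum_nonneg fun i _ => hgF i)
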